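/- Let f ∈ C^r(𝒪_F,E) and for h ∈ ℤ_{≥0} define f_h ∈ 𝓕^{[r]}(𝒪_F,S) by f_h(z) = Σ_{a∈A_h} 1_{a+ϖ_F^h𝒪_F}(z)·Σ_{i∈I_{≤[r]}} D_i f(a)·(z−a)^i/i!. Then: (i) there exist a constant C ∈ ℝ_{≥0} and n₀ ∈ ℤ_{≥0} such that ‖f_{h+1}−f_h‖_{𝓕_{h+1}} ≤ C·C_{f,r}(h)·q^{−rh} for all h ≥ n₀; and (ii) f_h converges to f in C^r(𝒪_F,E) as h → ∞. -/

import Mathlib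

/-!
Setting (cf. the paper's notations): `O` plays the role of the ring of integers `𝒪_F` of a
finite extension `F` of `ℚ_p`, `E` is the coefficient field (a finite extension of `ℚ_p`
with its p-adic absolute value, normalized by `|x| = p^{-val_F(x)}`, `val_F(p) = [F:ℚ_p]`),
`S` is the (finite) set of `ℚ_p`-algebra embeddings `F ↪ E`, restricted here to `O`,
`ν : O → ℝ` is the absolute value on `O` (the common restriction of the norm of `E` along any
embedding), `ϖ` is a fixed uniformizer with `ν ϖ = q⁻¹` where `q = p^f` is the cardinality
of the residue field, and `u * ϖ ^ e = p` records the ramification index `e`.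
-/

open scoped Classical

noncomputable section

namespace CrPaper

structure Setting (S O E : Type*) [Fintype S] [CommRing O] [NormedField E] where
  q : ℝ
  p : ℕ
  fdeg : ℕ
  hp : p.Prime
  hfdeg : 0 < fdeg
  hq : q = (p : ℝ) ^ fdeg
  emb : S → O →+* E
  emb_inj : ∀ s, Function.Injective (emb s)
  emb_distinct : Function.Injective emb
  ν : O → ℝ
  norm_emb : ∀ (s) (z : O), ‖emb s z‖ = ν z
  norm_le_one : ∀ (s) (z : O), ‖emb s z‖ ≤ 1
  norm_add_max : ∀ x y : E, ‖x + y‖ ≤ max ‖x‖ ‖y‖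
  ϖ : O
  ν_ϖ : ν ϖ = q⁻¹
  mem_ball_iff : ∀ (y : O) (n : ℕ), (∃ z, y = ϖ ^ n * z) ↔ ν y ≤ q⁻¹ ^ n
  ram : ∃ (e : ℕ) (u : O), 0 < e ∧ IsUnit u ∧ u * ϖ ^ e = (p : O)

variable {S O E : Type*} [Fintype S] [DecidableEq S] [CommRing O] [IsDomain O]
  [NormedField E] [CompleteSpace E] [CharZero E]

/-- The total weight `|i| = ∑ i_σ` of a multi-index. -/
def wt (i : S → ℕ) : ℕ := ∑ s, i s

/-- `i! = ∏ i_σ!` for a multi-index. -/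
def mfact (i : S → ℕ) : ℕ := ∏ s, (i s).factorial

/-- The (finite) set `I_{≤N}` of multi-indices of total weight `≤ N`. -/
def Idx (S : Type*) [Fintype S] [DecidableEq S] (N : ℕ) : Finset (S → ℕ) :=
  (Fintype.piFinset fun _ : S => Finset.range (N + 1)).filter fun i => wt i ≤ N

/-- `z^i = ∏_σ σ(z)^{i_σ}`. -/
def mpow (St : Setting S O E) (z : O) (i : S → ℕ) : E := ∏ s, St.emb s z ^ i s

/-- The Taylor remainder `ε_{f,N}(x,y) = f(x+y) − ∑_{|i|≤N} D_i f(x) y^i / i!`. -/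
def epsTay (St : Setting S O E) (N : ℕ) (f : O → E) (D : (S → ℕ) → O → E) (x y : O) : E :=
  f (x + y) - ∑ i ∈ Idx S N, D i x * mpow St y i / (mfact i : E)

/-- `f` is of class `C^r` with the family of bounded functions `D` witnessing the
definition: all `D_i` (`|i| ≤ ⌊r⌋`) are bounded and
`C_{f,r}(h) = sup_{x ∈ O, y ∈ ϖ^h O} |ε_{f,⌊r⌋}(x,y)| q^{rh} → 0` as `h → ∞`. -/
def IsCrWith (St : Setting S O E) (r : ℝ) (f : O → E) (D : (S → ℕ) → O → E) : Prop :=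
  (∀ i ∈ Idx S ⌊r⌋₊, ∃ C : ℝ, ∀ x : O, ‖D i x‖ ≤ C) ∧
  ∀ ε : ℝ, 0 < ε → ∃ M : ℕ, ∀ h : ℕ, M ≤ h → ∀ x z : O,
    ‖epsTay St ⌊r⌋₊ f D x (St.ϖ ^ h * z)‖ * St.q ^ (r * (h : ℝ)) ≤ ε

/-- `f` is of class `C^r`. -/
def IsCr (St : Setting S O E) (r : ℝ) (f : O → E) : Prop :=
  ∃ D, IsCrWith St r f D

/-- The `C^r`-norm of `f` (relative to the — unique — family `D`):
`max( sup_{i,x} |D_i f(x)/i!| , sup_{x,y} |ε_{f,⌊r⌋}(x,y)|/|y|^r )`. -/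
def CrNorm (St : Setting S O E) (r : ℝ) (f : O → E) (D : (S → ℕ) → O → E) : ℝ :=
  max (⨆ i : (Idx S ⌊r⌋₊), ⨆ x : O, ‖D i.1 x / (mfact i.1 : E)‖)
      (⨆ x : O, ⨆ y : O, ‖epsTay St ⌊r⌋₊ f D x y‖ / St.ν y ^ r)

/-- A compatible system of representatives `A_h` of `O/ϖ^h O` with `A_0 = {0}` and
`A_h ⊆ A_{h+1}`. -/
structure RepSystem (St : Setting S O E) where
  A : ℕ → Finset O
  hA0 : A 0 = {0}
  hmono : ∀ h : ℕ, A h ⊆ A (h + 1)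
  hrep : ∀ (h : ℕ) (z : O), ∃! a : O, a ∈ A h ∧ ∃ y : O, z = a + St.ϖ ^ h * y

/-- `A = ⋃_h A_h`. -/
def Aall (St : Setting S O E) (R : RepSystem St) : Set O := ⋃ h : ℕ, (R.A h : Set O)

/-- `l(a)`: the smallest `n` with `a ∈ A_n`. -/
def lA (St : Setting S O E) (R : RepSystem St) (a : O) : ℕ := sInf {n : ℕ | a ∈ R.A n}

/-- The characteristic function of `a + ϖ^n O`, with values in `E`. -/
def indC (St : Setting S O E) (a : O) (n : ℕ) : O → E := fun z =>
  if ∃ y : O, z = a + St.ϖ ^ n * y then 1 else 0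

/-- The approximation `f_h(z) = ∑_{a ∈ A_h} 1_{a+ϖ^h O}(z) ∑_{|i|≤[r]} D_i f(a) (z−a)^i/i!`. -/
def fApprox (St : Setting S O E) (R : RepSystem St) (r : ℝ)
    (D : (S → ℕ) → O → E) (h : ℕ) : O → E := fun z =>
  ∑ a ∈ R.A h, indC St a h z * ∑ i ∈ Idx S ⌊r⌋₊, D i a * mpow St (z - a) i / (mfact i : E)

/-- `C_{f,r}(h) = sup_{x ∈ O, y ∈ ϖ^h O} |ε_{f,[r]}(x,y)| q^{rh}`. -/
def CfrSup (St : Setting S O E) (r : ℝ) (f : O → E) (D : (S → ℕ) → O → E) (h : ℕ) : ℝ :=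
  ⨆ x : O, ⨆ z : O, ‖epsTay St ⌊r⌋₊ f D x (St.ϖ ^ h * z)‖ * St.q ^ (r * (h : ℝ))

/-!
On each ball of radius `q⁻ʰ` the monomials `z ↦ z^i` are distinct characters rescaled by powers of
`ϖʰ`, so Dedekind's independence of characters bounds the coefficients of a polynomial of bounded
degree on such a ball by its sup norm, with a constant that does not depend on `h`. Both
`f_{h+1} - f_h` and the derivatives of `f - f_h` are coefficients of polynomials whose values are
Taylor remainders of `f` at scale `h`. The resulting estimates at scale `h` imply the ones at every
coarser scale `m ≤ h` because all degrees are at most `r`, while at finer scales `f_h` is a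
polynomial and `f - f_h` has the same Taylor remainders as `f`.
-/

section LinearIndependence

variable {ι R X K : Type*} [Fintype ι]

lemma nextCoeff_prod_X_add_C_pow [CommRing K] (c : ι → K) (i : ι → ℕ) :
    (∏ s, (Polynomial.X + Polynomial.C (c s)) ^ i s).nextCoeff = ∑ s, (i s : K) * c s := by
  rw [Polynomial.Monic.nextCoeff_prod _ _ fun s _ => (Polynomial.monic_X_add_C _).pow _]
  simp only [(Polynomial.monic_X_add_C _).nextCoeff_pow, Polynomial.nextCoeff_X_add_C,
    nsmul_eq_mul]

/- Evaluating at `n + z` for all `n : ℕ` turns the equality of characters into an equality of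
polynomials in `n`, whose second coefficients give a linear relation between the `σ s`. -/
theorem prod_ringHom_pow_injective [NonAssocSemiring R] [CommRing K] [IsDomain K] [CharZero K]
    {σ : ι → R →+* K} (hσ : Function.Injective σ) :
    Function.Injective fun i : ι → ℕ => ∏ s, (σ s : R →* K) ^ i s := by
  intro i j hij
  have hpoly (z : R) : ∏ s, (Polynomial.X + Polynomial.C (σ s z)) ^ i s =
      ∏ s, (Polynomial.X + Polynomial.C (σ s z)) ^ j s := by
    refine Polynomial.eq_of_infinite_eval_eq _ _
      ((Set.infinite_range_of_injective (Nat.cast_injective (R := K))).mono ?_)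
    rintro _ ⟨n, rfl⟩
    simpa [Polynomial.eval_prod] using DFunLike.congr_fun hij ((n : R) + z)
  have hlinear (z : R) : ∑ s, ((i s : K) - j s) * σ s z = 0 := by
    simpa only [nextCoeff_prod_X_add_C_pow, ← sub_eq_zero (b := ∑ s, (j s : K) * σ s z),
      ← Finset.sum_sub_distrib, ← sub_mul] using congrArg Polynomial.nextCoeff (hpoly z)
  have hσ_indep : LinearIndependent K fun s => ((σ s : R →* K) : R → K) :=
    (linearIndependent_monoidHom R K).comp (fun s => (σ s : R →* K))
      (RingHom.coe_monoidHom_injective.comp hσ)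
  funext s
  refine Nat.cast_injective (R := K) (sub_eq_zero.mp ?_)
  refine Fintype.linearIndependent_iff.mp hσ_indep (fun s => (i s : K) - j s) ?_ s
  funext z
  simpa using hlinear z

theorem linearIndependent_prod_ringHom_pow [NonAssocSemiring R] [CommRing K] [IsDomain K]
    [CharZero K] {σ : ι → R →+* K} (hσ : Function.Injective σ) :
    LinearIndependent K fun (i : ι → ℕ) (z : R) => ∏ s, σ s z ^ i s := by
  convert (linearIndependent_monoidHom R K).comp _ (prod_ringHom_pow_injective hσ) using 2 with i
  funext z
  simp

theorem exists_finsupp_sum_mul_eq_coeff [Field K] {v : ι → X → K} (hv : LinearIndependent K v)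
    (k : ι) :
    ∃ l : X →₀ K, ∀ d : ι → K, (l.sum fun x a => a * ∑ i, d i * v i x) = d k := by
  have hmem : (Pi.single k 1 : ι → K) ∈ Submodule.span K (Set.range (flip v)) := by
    rw [span_flip_eq_top_iff_linearIndependent.mpr hv]
    exact Submodule.mem_top
  obtain ⟨l, hl⟩ := Finsupp.mem_span_range_iff_exists_finsupp.mp hmem
  refine ⟨l, fun d => ?_⟩
  calc (l.sum fun x a => a * ∑ i, d i * v i x)
      = ∑ i, d i * (l.sum fun x a => a • flip v x) i := by
        simp only [Finsupp.sum, Finset.sum_apply, Pi.smul_apply, smul_eq_mul, flip,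
          Finset.mul_sum]
        rw [Finset.sum_comm]
        exact Finset.sum_congr rfl fun i _ => Finset.sum_congr rfl fun x _ => by ring
    _ = d k := by simp [hl, Pi.single_apply]

theorem exists_norm_coeff_le_mul_of_linearIndependent [NormedField K] {v : ι → X → K}
    (hv : LinearIndependent K v) :
    ∃ C : ℝ, ∀ (d : ι → K) (B : ℝ), (∀ x, ‖∑ i, d i * v i x‖ ≤ B) → ∀ i, ‖d i‖ ≤ C * B := by
  choose l hl using exists_finsupp_sum_mul_eq_coeff hv
  let c (i : ι) : ℝ := ∑ x ∈ (l i).support, ‖l i x‖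
  have hc (i : ι) : 0 ≤ c i := Finset.sum_nonneg fun _ _ => norm_nonneg _
  refine ⟨∑ i, c i, fun d B hB k => ?_⟩
  calc ‖d k‖ ≤ ∑ x ∈ (l k).support, ‖l k x‖ * B := by
        rw [← hl k d, Finsupp.sum]
        refine norm_sum_le_of_le _ fun x _ => ?_
        rw [norm_mul]
        exact mul_le_mul_of_nonneg_left (hB x) (norm_nonneg _)
    _ = c k * B := (Finset.sum_mul ..).symm
    _ ≤ (∑ i, c i) * B := by
        rcases isEmpty_or_nonempty X with _ | ⟨⟨x⟩⟩
        · simp [c, Finset.eq_empty_of_isEmpty]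
        · exact mul_le_mul_of_nonneg_right
            (Finset.single_le_sum (fun i _ => hc i) (Finset.mem_univ k))
            ((norm_nonneg _).trans (hB x))

end LinearIndependence

section MultiIndex

omit [DecidableEq S] in
lemma wt_add (i j : S → ℕ) : wt (i + j) = wt i + wt j :=
  Finset.sum_add_distrib

lemma mem_Idx {N : ℕ} {i : S → ℕ} : i ∈ Idx S N ↔ wt i ≤ N := by
  simp only [Idx, Finset.mem_filter, Fintype.mem_piFinset, Finset.mem_range,
    and_iff_right_iff_imp, Nat.lt_succ_iff]
  exact fun h s => (Finset.single_le_sum (fun _ _ => Nat.zero_le _) (Finset.mem_univ s)).trans h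

lemma sum_Idx_sum_Iic {M : Type*} [AddCommMonoid M] (N : ℕ) (F : (S → ℕ) → (S → ℕ) → M) :
    ∑ j ∈ Idx S N, ∑ i ∈ Finset.Iic j, F i (j - i) =
      ∑ i ∈ Idx S N, ∑ k ∈ Idx S (N - wt i), F i k := by
  rw [Finset.sum_sigma', Finset.sum_sigma']
  refine Finset.sum_nbij' (fun x => ⟨x.2, x.1 - x.2⟩) (fun x => ⟨x.1 + x.2, x.1⟩) ?_ ?_ ?_ ?_ ?_
  · rintro ⟨j, i⟩ hx
    simp only [Finset.mem_sigma, mem_Idx, Finset.mem_Iic] at hx ⊢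
    have := wt_add i (j - i)
    rw [add_tsub_cancel_of_le hx.2] at this
    omega
  · rintro ⟨i, k⟩ hx
    simp only [Finset.mem_sigma, mem_Idx, Finset.mem_Iic, wt_add] at hx ⊢
    exact ⟨by omega, le_self_add⟩
  · rintro ⟨j, i⟩ hx
    simp only [Finset.mem_sigma, Finset.mem_Iic] at hx
    simp [add_tsub_cancel_of_le hx.2]
  · rintro ⟨i, k⟩ -
    simp
  · rintro ⟨j, i⟩ -
    rfl

end MultiIndex

section WithoutCompleteness

omit [IsDomain O] [CompleteSpace E]

section Monomials

omit [DecidableEq S] [CharZero E]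

namespace Setting

lemma one_lt_q (St : Setting S O E) : 1 < St.q := by
  rw [St.hq]
  exact one_lt_pow₀ (by exact_mod_cast St.hp.one_lt) St.hfdeg.ne'

lemma q_pos (St : Setting S O E) : 0 < St.q :=
  one_pos.trans St.one_lt_q

lemma isUltrametricDist (St : Setting S O E) : IsUltrametricDist E :=
  IsUltrametricDist.isUltrametricDist_of_forall_norm_add_le_max_norm St.norm_add_max

lemma norm_sub_le_of_le (St : Setting S O E) {x y : E} {c : ℝ} (hx : ‖x‖ ≤ c) (hy : ‖y‖ ≤ c) :
    ‖x - y‖ ≤ c := by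
  rw [sub_eq_add_neg]
  exact (St.norm_add_max x (-y)).trans (max_le hx (norm_neg y ▸ hy))

lemma inv_q_pow_rpow (St : Setting S O E) (n : ℕ) (r : ℝ) :
    (St.q⁻¹ ^ n) ^ r = St.q ^ (-(r * n)) := by
  rw [← Real.rpow_natCast, Real.inv_rpow St.q_pos.le, ← Real.rpow_neg St.q_pos.le,
    ← Real.rpow_mul St.q_pos.le]
  ring_nf

lemma le_mul_q_rpow_neg_iff (St : Setting S O E) {a b t : ℝ} :
    a ≤ b * St.q ^ (-t) ↔ a * St.q ^ t ≤ b := by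
  rw [Real.rpow_neg St.q_pos.le, ← div_eq_mul_inv, le_div_iff₀ (Real.rpow_pos_of_pos St.q_pos t)]

/- Weights `w ≤ r` lose less than the factor `q ^ (r * (h - m))` gained when passing from scale `h`
to the coarser scale `m`. -/
lemma mul_q_rpow_le_of_le (St : Setting S O E) {a c r w : ℝ} {m h : ℕ} (hc : 0 ≤ c) (hm : m ≤ h)
    (hw : w ≤ r) (ha : a * St.q ^ (-((h : ℝ) * w)) ≤ c * St.q ^ (-(r * (h : ℝ)))) :
    a * St.q ^ (-((m : ℝ) * w)) ≤ c * St.q ^ (-(r * (m : ℝ))) := by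
  have hq := St.q_pos
  have hm' : (m : ℝ) ≤ h := Nat.cast_le.mpr hm
  calc a * St.q ^ (-((m : ℝ) * w))
      = a * St.q ^ (-((h : ℝ) * w)) * St.q ^ ((h - m : ℝ) * w) := by
        rw [mul_assoc, ← Real.rpow_add hq]
        ring_nf
    _ ≤ c * St.q ^ (-(r * (h : ℝ))) * St.q ^ ((h - m : ℝ) * w) := by gcongr
    _ = c * St.q ^ (-(r * (h : ℝ)) + (h - m : ℝ) * w) := by rw [mul_assoc, ← Real.rpow_add hq]
    _ ≤ c * St.q ^ (-(r * (m : ℝ))) := by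
        refine mul_le_mul_of_nonneg_left (Real.rpow_le_rpow_of_exponent_le St.one_lt_q.le ?_) hc
        nlinarith [mul_nonneg (sub_nonneg.mpr hm') (sub_nonneg.mpr hw)]

end Setting

lemma mpow_mul (St : Setting S O E) (y z : O) (i : S → ℕ) :
    mpow St (y * z) i = mpow St y i * mpow St z i := by
  simp only [mpow, map_mul, mul_pow, Finset.prod_mul_distrib]

lemma norm_mpow_uniformizer_pow (St : Setting S O E) (h : ℕ) (i : S → ℕ) :
    ‖mpow St (St.ϖ ^ h) i‖ = St.q ^ (-((h : ℝ) * (wt i : ℝ))) := by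
  simp only [mpow, norm_prod, map_pow, norm_pow, St.norm_emb, St.ν_ϖ,
    Finset.prod_pow_eq_pow_sum]
  rw [← Real.rpow_natCast, St.inv_q_pow_rpow, mul_comm, wt]

lemma norm_mpow_le_one (St : Setting S O E) (y : O) (i : S → ℕ) : ‖mpow St y i‖ ≤ 1 := by
  rw [mpow, norm_prod]
  refine Finset.prod_le_one (fun _ _ => norm_nonneg _) fun s _ => ?_
  rw [norm_pow]
  exact pow_le_one₀ (norm_nonneg _) (St.norm_le_one s y)

lemma norm_mpow_uniformizer_pow_mul_le (St : Setting S O E) (h : ℕ) (y : O) (i : S → ℕ) :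
    ‖mpow St (St.ϖ ^ h * y) i‖ ≤ St.q ^ (-((h : ℝ) * (wt i : ℝ))) := by
  rw [mpow_mul, norm_mul, norm_mpow_uniformizer_pow]
  exact mul_le_of_le_one_right (Real.rpow_nonneg St.q_pos.le _) (norm_mpow_le_one St y i)

end Monomials

section CoefficientBound

/-- `K` bounds the Gauss norm by the sup norm for polynomials of degree at most `N`, on the balls
`ϖ ^ h * O` of all radii at once. -/
def IsCoeffBound (St : Setting S O E) (N : ℕ) (K : ℝ) : Prop :=
  ∀ (h : ℕ) (d : (S → ℕ) → E) (B : ℝ),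
    (∀ y, ‖∑ i ∈ Idx S N, d i * mpow St (St.ϖ ^ h * y) i‖ ≤ B) →
    ∀ i ∈ Idx S N, ‖d i‖ * St.q ^ (-((h : ℝ) * (wt i : ℝ))) ≤ K * B

theorem exists_one_le_isCoeffBound (St : Setting S O E) (N : ℕ) :
    ∃ K : ℝ, 1 ≤ K ∧ IsCoeffBound St N K := by
  have hindep : LinearIndependent E fun (i : Idx S N) (z : O) => mpow St z i :=
    (linearIndependent_prod_ringHom_pow St.emb_distinct).comp _ Subtype.val_injective
  obtain ⟨C, hC⟩ := exists_norm_coeff_le_mul_of_linearIndependent hindep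
  refine ⟨max 1 C, le_max_left _ _, fun h d B hB i hi => ?_⟩
  have hrescaled (y : O) :
      ∑ j : Idx S N, d j * mpow St (St.ϖ ^ h) j * mpow St y j =
        ∑ j ∈ Idx S N, d j * mpow St (St.ϖ ^ h * y) j := by
    simp only [mpow_mul, mul_assoc]
    exact Finset.sum_coe_sort _ fun j => d j * (mpow St (St.ϖ ^ h) j * mpow St y j)
  calc ‖d i‖ * St.q ^ (-((h : ℝ) * (wt i : ℝ))) = ‖d i * mpow St (St.ϖ ^ h) i‖ := by
        rw [norm_mul, norm_mpow_uniformizer_pow]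
    _ ≤ C * B := hC (fun j => d j * mpow St (St.ϖ ^ h) j) B
        (fun y => (hrescaled y).symm ▸ hB y) ⟨i, hi⟩
    _ ≤ max 1 C * B := mul_le_mul_of_nonneg_right (le_max_right _ _) ((norm_nonneg _).trans (hB 0))

end CoefficientBound

section TaylorFormula

omit [DecidableEq S] [CharZero E] in
lemma mpow_div_mfact (St : Setting S O E) (z : O) (i : S → ℕ) :
    mpow St z i / (mfact i : E) = ∏ s, St.emb s z ^ i s / ((i s).factorial : E) := by
  rw [mpow, mfact, Nat.cast_prod, Finset.prod_div_distrib]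

lemma add_pow_div_factorial {K : Type*} [Field K] [CharZero K] (x y : K) (n : ℕ) :
    (x + y) ^ n / (n.factorial : K) =
      ∑ m ∈ Finset.Iic n, x ^ m / (m.factorial : K) * (y ^ (n - m) / ((n - m).factorial : K)) := by
  rw [add_pow, ← Nat.range_succ_eq_Iic, Finset.sum_div]
  refine Finset.sum_congr rfl fun m hm => ?_
  rw [Nat.cast_choose K (Nat.lt_succ_iff.mp (Finset.mem_range.mp hm))]
  have := Nat.cast_ne_zero (R := K).mpr n.factorial_ne_zero
  field_simp

lemma mpow_add_div_mfact (St : Setting S O E) (w y : O) (j : S → ℕ) :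
    mpow St (w + y) j / (mfact j : E) = ∑ i ∈ Finset.Iic j,
      mpow St y i / (mfact i : E) * (mpow St w (j - i) / (mfact (j - i) : E)) := by
  simp only [mpow_div_mfact, add_comm w y, map_add, add_pow_div_factorial, Finset.prod_univ_sum,
    Finset.prod_mul_distrib, Pi.sub_apply]
  exact Finset.sum_congr (by ext; simp [Pi.le_def]) fun _ _ => rfl

/-- The `i`-th derivative at `w` of the polynomial `z ↦ ∑_{|j| ≤ N} b_j z^j / j!`. The truncated
subtraction `N - wt i` is only meaningful for `wt i ≤ N`. -/
def polyDeriv (St : Setting S O E) (N : ℕ) (b : (S → ℕ) → E) (w : O) (i : S → ℕ) : E :=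
  ∑ k ∈ Idx S (N - wt i), b (i + k) * mpow St w k / (mfact k : E)

theorem sum_mpow_add_eq_sum_polyDeriv (St : Setting S O E) (N : ℕ) (b : (S → ℕ) → E) (w y : O) :
    ∑ j ∈ Idx S N, b j * mpow St (w + y) j / (mfact j : E) =
      ∑ i ∈ Idx S N, polyDeriv St N b w i * mpow St y i / (mfact i : E) := by
  calc ∑ j ∈ Idx S N, b j * mpow St (w + y) j / (mfact j : E)
      = ∑ j ∈ Idx S N, ∑ i ∈ Finset.Iic j, b (i + (j - i)) *
          (mpow St y i / (mfact i : E) * (mpow St w (j - i) / (mfact (j - i) : E))) := by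
        refine Finset.sum_congr rfl fun j _ => ?_
        rw [mul_div_assoc, mpow_add_div_mfact, Finset.mul_sum]
        refine Finset.sum_congr rfl fun i hi => ?_
        rw [add_tsub_cancel_of_le (Finset.mem_Iic.mp hi)]
    _ = ∑ i ∈ Idx S N, ∑ k ∈ Idx S (N - wt i), b (i + k) *
          (mpow St y i / (mfact i : E) * (mpow St w k / (mfact k : E))) :=
        sum_Idx_sum_Iic N fun i k =>
          b (i + k) * (mpow St y i / (mfact i : E) * (mpow St w k / (mfact k : E)))
    _ = ∑ i ∈ Idx S N, polyDeriv St N b w i * mpow St y i / (mfact i : E) := by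
        refine Finset.sum_congr rfl fun i _ => ?_
        rw [polyDeriv, Finset.sum_mul, Finset.sum_div]
        exact Finset.sum_congr rfl fun k _ => by ring

end TaylorFormula

section ClassCr

omit [CharZero E]

variable {St : Setting S O E} {r : ℝ} {f g : O → E} {D D' : (S → ℕ) → O → E}

lemma epsTay_sub (N : ℕ) (x y : O) :
    epsTay St N (f - g) (D - D') x y = epsTay St N f D x y - epsTay St N g D' x y := by
  simp only [epsTay, Pi.sub_apply, sub_mul, sub_div, Finset.sum_sub_distrib]
  ring

lemma sum_div_mfact_mul_mpow_eq_sub_epsTay (N : ℕ) (x y : O) :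
    ∑ i ∈ Idx S N, D i x / (mfact i : E) * mpow St y i = f (x + y) - epsTay St N f D x y := by
  simp only [epsTay, sub_sub_cancel, mul_div_right_comm]

theorem IsCrWith.sub (hf : IsCrWith St r f D) (hg : IsCrWith St r g D') :
    IsCrWith St r (f - g) (D - D') := by
  refine ⟨fun i hi => ?_, fun η hη => ?_⟩
  · obtain ⟨⟨A, hA⟩, ⟨B, hB⟩⟩ := And.intro (hf.1 i hi) (hg.1 i hi)
    exact ⟨A + B, fun x => _root_.norm_sub_le_of_le (hA x) (hB x)⟩
  · obtain ⟨⟨M, hM⟩, ⟨M', hM'⟩⟩ := And.intro (hf.2 η hη) (hg.2 η hη)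
    refine ⟨max M M', fun h hh x z => ?_⟩
    rw [epsTay_sub, ← St.le_mul_q_rpow_neg_iff]
    exact St.norm_sub_le_of_le
      (St.le_mul_q_rpow_neg_iff.mpr (hM h (le_of_max_le_left hh) x z))
      (St.le_mul_q_rpow_neg_iff.mpr (hM' h (le_of_max_le_right hh) x z))

theorem IsCrWith.exists_norm_epsTay_le (hf : IsCrWith St r f D) {δ : ℝ} (hδ : 0 < δ) :
    ∃ M : ℕ, ∀ h, M ≤ h → ∀ x z,
      ‖epsTay St ⌊r⌋₊ f D x (St.ϖ ^ h * z)‖ ≤ δ * St.q ^ (-(r * (h : ℝ))) := by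
  obtain ⟨M, hM⟩ := hf.2 δ hδ
  exact ⟨M, fun h hh x z => St.le_mul_q_rpow_neg_iff.mpr (hM h hh x z)⟩

/- The supremum `CfrSup` takes the value `0` when it is infinite, hence the restriction to large
`h`. -/
theorem IsCrWith.exists_norm_epsTay_le_CfrSup (hf : IsCrWith St r f D) :
    ∃ M : ℕ, ∀ h, M ≤ h → ∀ x z, ‖epsTay St ⌊r⌋₊ f D x (St.ϖ ^ h * z)‖ ≤
      CfrSup St r f D h * St.q ^ (-(r * (h : ℝ))) := by
  obtain ⟨M, hM⟩ := hf.2 1 one_pos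
  refine ⟨M, fun h hh x z => St.le_mul_q_rpow_neg_iff.mpr ?_⟩
  let u (x z : O) : ℝ := ‖epsTay St ⌊r⌋₊ f D x (St.ϖ ^ h * z)‖ * St.q ^ (r * (h : ℝ))
  have hbdd (x : O) : BddAbove (Set.range (u x)) := ⟨1, Set.forall_mem_range.mpr (hM h hh x)⟩
  have hbdd_sup : BddAbove (Set.range fun x => ⨆ z, u x z) :=
    ⟨1, Set.forall_mem_range.mpr fun x => ciSup_le (hM h hh x)⟩
  exact (le_ciSup (hbdd x) z).trans (le_ciSup hbdd_sup x)

theorem IsCrWith.exists_norm_epsTay_le_of_nonneg (hr : 0 ≤ r) (hf : IsCrWith St r f D) {η : ℝ}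
    (hη : 0 < η) (x : O) : ∃ m : ℕ, ∀ z, ‖epsTay St ⌊r⌋₊ f D x (St.ϖ ^ m * z)‖ ≤ η := by
  obtain ⟨M, hM⟩ := hf.2 η hη
  refine ⟨M, fun z => (le_mul_of_one_le_right (norm_nonneg _) ?_).trans (hM M le_rfl x z)⟩
  exact Real.one_le_rpow St.one_lt_q.le (by positivity)

lemma crNorm_le {c : ℝ} (hc : 0 ≤ c)
    (hD : ∀ i ∈ Idx S ⌊r⌋₊, ∀ x, ‖D i x / (mfact i : E)‖ ≤ c)
    (hε : ∀ x y, ‖epsTay St ⌊r⌋₊ f D x y‖ / St.ν y ^ r ≤ c) : CrNorm St r f D ≤ c :=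
  max_le (Real.iSup_le (fun i => Real.iSup_le (hD i i.2) hc) hc)
    (Real.iSup_le (fun x => Real.iSup_le (hε x) hc) hc)

omit [DecidableEq S] in
/- If `ϖ ^ m` divides `y` for all `m`, then `ν y ^ r` carries no information and `hφ` forces
`φ y = 0`. -/
lemma norm_div_rpow_le {φ : O → E} {c : ℝ} (hr : 0 ≤ r) (hc : 0 ≤ c)
    (hφ : ∀ η : ℝ, 0 < η → ∃ m : ℕ, ∀ z, ‖φ (St.ϖ ^ m * z)‖ ≤ η)
    (hφ_scale : ∀ (m : ℕ) (z : O), ‖φ (St.ϖ ^ m * z)‖ ≤ c * St.q ^ (-(r * (m : ℝ)))) (y : O) :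
    ‖φ y‖ / St.ν y ^ r ≤ c * St.q ^ r := by
  have hq := St.q_pos
  by_cases hy : FiniteMultiplicity St.ϖ y
  · obtain ⟨z, hz, -⟩ := hy.exists_eq_pow_mul_and_not_dvd
    set m := multiplicity St.ϖ y
    have hν : St.q⁻¹ ^ (m + 1) < St.ν y := not_le.mp <|
      mt (St.mem_ball_iff y (m + 1)).mpr (hy.not_pow_dvd_of_multiplicity_lt m.lt_succ_self)
    have hq_pow : 0 < St.q⁻¹ ^ (m + 1) := by positivity
    rw [div_le_iff₀ (Real.rpow_pos_of_pos (hq_pow.trans hν) r)]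
    calc ‖φ y‖ ≤ c * St.q ^ (-(r * (m : ℝ))) := by
          rw [hz]
          exact hφ_scale m z
      _ = c * St.q ^ r * (St.q⁻¹ ^ (m + 1)) ^ r := by
          rw [St.inv_q_pow_rpow, mul_assoc, ← Real.rpow_add hq]
          push_cast
          ring_nf
      _ ≤ c * St.q ^ r * St.ν y ^ r := by gcongr
  · have hφy : ‖φ y‖ ≤ 0 := by
      refine le_of_forall_pos_le_add fun η hη => ?_
      obtain ⟨m, hm⟩ := hφ η hη
      obtain ⟨z, rfl⟩ := FiniteMultiplicity.not_iff_forall.mp hy m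
      simpa using hm z
    rw [le_antisymm hφy (norm_nonneg _), zero_div]
    positivity

end ClassCr

section Approximation

variable {St : Setting S O E} (R : RepSystem St) {r : ℝ} {f : O → E} {D : (S → ℕ) → O → E}

/-- The representative in `A_h` of the class of `z` modulo `ϖ ^ h`. -/
def RepSystem.rep (h : ℕ) (z : O) : O := (R.hrep h z).choose

omit [DecidableEq S] [CharZero E] in
lemma RepSystem.rep_spec (h : ℕ) (z : O) :
    R.rep h z ∈ R.A h ∧ ∃ y, z = R.rep h z + St.ϖ ^ h * y :=
  (R.hrep h z).choose_spec.1

omit [DecidableEq S] [CharZero E] in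
lemma RepSystem.rep_add_uniformizer_pow_mul (h : ℕ) (x y : O) :
    R.rep h (x + St.ϖ ^ h * y) = R.rep h x := by
  obtain ⟨hx, z, hz⟩ := R.rep_spec h x
  refine (R.hrep h _).unique (R.rep_spec h _) ⟨hx, z + y, ?_⟩
  nth_rewrite 1 [hz]
  ring

omit [CharZero E] in
lemma fApprox_eq_sum_rep (D : (S → ℕ) → O → E) (h : ℕ) (z : O) :
    fApprox St R r D h z =
      ∑ i ∈ Idx S ⌊r⌋₊, D i (R.rep h z) * mpow St (z - R.rep h z) i / (mfact i : E) := by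
  obtain ⟨hmem, hz⟩ := R.rep_spec h z
  rw [fApprox, Finset.sum_eq_single_of_mem _ hmem, indC, if_pos hz, one_mul]
  intro a ha hne
  rw [indC, if_neg, zero_mul]
  exact fun hza => hne ((R.hrep h z).unique ⟨ha, hza⟩ ⟨hmem, hz⟩)

omit [CharZero E] in
lemma exists_sub_fApprox_eq_epsTay (f : O → E) (D : (S → ℕ) → O → E) (h : ℕ) (z : O) :
    ∃ a y, f z - fApprox St R r D h z = epsTay St ⌊r⌋₊ f D a (St.ϖ ^ h * y) := by
  obtain ⟨-, y, hy⟩ := R.rep_spec h z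
  refine ⟨R.rep h z, y, ?_⟩
  rw [fApprox_eq_sum_rep, epsTay, ← hy, ← sub_eq_iff_eq_add'.mpr hy]

omit [CharZero E] in
lemma norm_fApprox_succ_sub_le {h : ℕ} {B : ℝ}
    (hB : ∀ x z, ‖epsTay St ⌊r⌋₊ f D x (St.ϖ ^ h * z)‖ ≤ B) (z : O) :
    ‖fApprox St R r D (h + 1) z - fApprox St R r D h z‖ ≤ B := by
  obtain ⟨a, y, hay⟩ := exists_sub_fApprox_eq_epsTay R f D h z
  obtain ⟨a', y', hay'⟩ := exists_sub_fApprox_eq_epsTay R f D (h + 1) z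
  rw [← sub_sub_sub_cancel_left _ _ (f z), hay, hay', pow_succ, mul_assoc]
  exact St.norm_sub_le_of_le (hB a y) (hB a' (St.ϖ * y'))

theorem exists_norm_coeff_fApprox_succ_sub_le (hf : IsCrWith St r f D) :
    ∃ C : ℝ, 0 ≤ C ∧ ∃ n₀ : ℕ, ∀ h, n₀ ≤ h → ∀ (a : O) (d : (S → ℕ) → E),
      (∀ y, fApprox St R r D (h + 1) (a + St.ϖ ^ (h + 1) * y) -
          fApprox St R r D h (a + St.ϖ ^ (h + 1) * y) =
        ∑ i ∈ Idx S ⌊r⌋₊, d i * mpow St (St.ϖ ^ (h + 1) * y) i) →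
      ∀ i ∈ Idx S ⌊r⌋₊, ‖d i‖ * St.q ^ (-(((h : ℝ) + 1) * (wt i : ℝ))) ≤
        C * CfrSup St r f D h * St.q ^ (-(r * (h : ℝ))) := by
  obtain ⟨K, hK_one, hK⟩ := exists_one_le_isCoeffBound St ⌊r⌋₊
  obtain ⟨n₀, hn₀⟩ := hf.exists_norm_epsTay_le_CfrSup
  refine ⟨K, zero_le_one.trans hK_one, n₀, fun h hh a d hd i hi => ?_⟩
  rw [mul_assoc K, ← Nat.cast_succ]
  refine hK (h + 1) d _ (fun y => ?_) i hi
  rw [← hd y]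
  exact norm_fApprox_succ_sub_le R (hn₀ h hh) _

/-- The derivatives of the locally polynomial function `fApprox St R r D h`. -/
def fApproxDeriv (r : ℝ) (D : (S → ℕ) → O → E) (h : ℕ) (i : S → ℕ) (x : O) : E :=
  polyDeriv St ⌊r⌋₊ (fun j => D j (R.rep h x)) (x - R.rep h x) i

lemma epsTay_fApprox (D : (S → ℕ) → O → E) {h m : ℕ} (hm : h ≤ m) (x y : O) :
    epsTay St ⌊r⌋₊ (fApprox St R r D h) (fApproxDeriv R r D h) x (St.ϖ ^ m * y) = 0 := by
  obtain ⟨k, rfl⟩ := Nat.exists_eq_add_of_le hm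
  rw [epsTay, sub_eq_zero, fApprox_eq_sum_rep, pow_add, mul_assoc, R.rep_add_uniformizer_pow_mul,
    add_sub_right_comm, sum_mpow_add_eq_sum_polyDeriv]
  rfl

lemma epsTay_sub_fApprox (f : O → E) (D : (S → ℕ) → O → E) {h m : ℕ} (hm : h ≤ m) (x y : O) :
    epsTay St ⌊r⌋₊ (f - fApprox St R r D h) (D - fApproxDeriv R r D h) x (St.ϖ ^ m * y) =
      epsTay St ⌊r⌋₊ f D x (St.ϖ ^ m * y) := by
  rw [epsTay_sub, epsTay_fApprox R D hm, sub_zero]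

theorem isCrWith_fApprox (hD : ∀ i ∈ Idx S ⌊r⌋₊, ∃ C : ℝ, ∀ x, ‖D i x‖ ≤ C) (h : ℕ) :
    IsCrWith St r (fApprox St R r D h) (fApproxDeriv R r D h) := by
  refine ⟨fun i hi => ?_, fun η hη => ⟨h, fun m hm x z => ?_⟩⟩
  · choose! C hC using hD
    refine ⟨∑ k ∈ Idx S (⌊r⌋₊ - wt i), C (i + k) * ‖(mfact k : E)‖⁻¹, fun x => ?_⟩
    refine norm_sum_le_of_le _ fun k hk => ?_
    have hik : i + k ∈ Idx S ⌊r⌋₊ := by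
      rw [mem_Idx] at hi hk ⊢
      rw [wt_add]
      omega
    rw [norm_div, norm_mul, div_eq_mul_inv]
    gcongr
    exact (mul_le_of_le_one_right (norm_nonneg _) (norm_mpow_le_one St _ k)).trans (hC _ hik _)
  · rw [epsTay_fApprox R D hm, norm_zero, zero_mul]
    exact hη.le

end Approximation

section Convergence

variable {St : Setting S O E} (R : RepSystem St) {r K δ : ℝ} {f : O → E}
  {D : (S → ℕ) → O → E} {h : ℕ}

omit [CharZero E] in
lemma norm_sub_fApprox_le (hδ : ∀ x z, ‖epsTay St ⌊r⌋₊ f D x (St.ϖ ^ h * z)‖ ≤ δ) (z : O) :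
    ‖f z - fApprox St R r D h z‖ ≤ δ := by
  obtain ⟨a, y, hay⟩ := exists_sub_fApprox_eq_epsTay R f D h z
  exact hay ▸ hδ a y

lemma norm_deriv_sub_fApprox_mul_le (hK : IsCoeffBound St ⌊r⌋₊ K)
    (hδ : ∀ x z, ‖epsTay St ⌊r⌋₊ f D x (St.ϖ ^ h * z)‖ ≤ δ)
    {i : S → ℕ} (hi : i ∈ Idx S ⌊r⌋₊) (x : O) :
    ‖(D - fApproxDeriv R r D h) i x / (mfact i : E)‖ * St.q ^ (-((h : ℝ) * (wt i : ℝ))) ≤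
      K * δ := by
  refine hK h (fun i => (D - fApproxDeriv R r D h) i x / (mfact i : E)) δ (fun y => ?_) i hi
  rw [sum_div_mfact_mul_mpow_eq_sub_epsTay (f := f - fApprox St R r D h),
    epsTay_sub_fApprox R f D le_rfl]
  exact St.norm_sub_le_of_le (norm_sub_fApprox_le R hδ _) (hδ x y)

lemma norm_deriv_sub_fApprox_mul_le_of_le (hr : 0 ≤ r) (hK : IsCoeffBound St ⌊r⌋₊ K)
    (hKδ : 0 ≤ K * δ)
    (hδ : ∀ x z, ‖epsTay St ⌊r⌋₊ f D x (St.ϖ ^ h * z)‖ ≤ δ * St.q ^ (-(r * (h : ℝ))))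
    {m : ℕ} (hm : m ≤ h) {i : S → ℕ} (hi : i ∈ Idx S ⌊r⌋₊) (x : O) :
    ‖(D - fApproxDeriv R r D h) i x / (mfact i : E)‖ * St.q ^ (-((m : ℝ) * (wt i : ℝ))) ≤
      K * δ * St.q ^ (-(r * (m : ℝ))) := by
  have hwt : (wt i : ℝ) ≤ r := (Nat.cast_le.mpr (mem_Idx.mp hi)).trans (Nat.floor_le hr)
  refine St.mul_q_rpow_le_of_le hKδ hm hwt ?_
  rw [mul_assoc K]
  exact norm_deriv_sub_fApprox_mul_le R hK hδ hi x

lemma norm_epsTay_sub_fApprox_le (hr : 0 ≤ r) (hK : IsCoeffBound St ⌊r⌋₊ K) (hK_one : 1 ≤ K)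
    (hδ_nonneg : 0 ≤ δ)
    (hδ : ∀ m, h ≤ m → ∀ x z,
      ‖epsTay St ⌊r⌋₊ f D x (St.ϖ ^ m * z)‖ ≤ δ * St.q ^ (-(r * (m : ℝ))))
    (m : ℕ) (x y : O) :
    ‖epsTay St ⌊r⌋₊ (f - fApprox St R r D h) (D - fApproxDeriv R r D h) x (St.ϖ ^ m * y)‖ ≤
      K * δ * St.q ^ (-(r * (m : ℝ))) := by
  have hq := St.q_pos
  have hδK : δ ≤ K * δ := le_mul_of_one_le_left hδ_nonneg hK_one
  have hKδ : 0 ≤ K * δ := hδ_nonneg.trans hδK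
  rcases le_total h m with hm | hm
  · rw [epsTay_sub_fApprox R f D hm]
    exact (hδ m hm x y).trans (by gcongr)
  · have := St.isUltrametricDist
    have hvalue : ‖(f - fApprox St R r D h) (x + St.ϖ ^ m * y)‖ ≤
        K * δ * St.q ^ (-(r * (m : ℝ))) := by
      refine (norm_sub_fApprox_le R (hδ h le_rfl) _).trans ?_
      gcongr
      exact St.one_lt_q.le
    refine St.norm_sub_le_of_le hvalue
      (IsUltrametricDist.norm_sum_le_of_forall_le_of_nonneg (by positivity) fun i hi => ?_)
    rw [mul_div_right_comm, norm_mul]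
    exact (mul_le_mul_of_nonneg_left (norm_mpow_uniformizer_pow_mul_le St m y i)
      (norm_nonneg _)).trans
        (norm_deriv_sub_fApprox_mul_le_of_le R hr hK hKδ (hδ h le_rfl) hm hi x)

lemma crNorm_sub_fApprox_le (hr : 0 ≤ r) (hf : IsCrWith St r f D) (hK : IsCoeffBound St ⌊r⌋₊ K)
    (hK_one : 1 ≤ K) (hδ_nonneg : 0 ≤ δ)
    (hδ : ∀ m, h ≤ m → ∀ x z,
      ‖epsTay St ⌊r⌋₊ f D x (St.ϖ ^ m * z)‖ ≤ δ * St.q ^ (-(r * (m : ℝ)))) :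
    CrNorm St r (f - fApprox St R r D h) (D - fApproxDeriv R r D h) ≤ K * δ * St.q ^ r := by
  have hq := St.q_pos
  have hKδ : 0 ≤ K * δ := by positivity
  refine crNorm_le (by positivity) (fun i hi x => ?_) fun x y => ?_
  · have hscale_zero : ‖(D - fApproxDeriv R r D h) i x / (mfact i : E)‖ ≤ K * δ := by
      simpa using
        norm_deriv_sub_fApprox_mul_le_of_le R hr hK hKδ (hδ h le_rfl) (Nat.zero_le h) hi x
    exact hscale_zero.trans
      (le_mul_of_one_le_right hKδ (Real.one_le_rpow St.one_lt_q.le hr))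
  · have hCr := hf.sub (isCrWith_fApprox R hf.1 h)
    exact norm_div_rpow_le hr hKδ (fun η hη => hCr.exists_norm_epsTay_le_of_nonneg hr hη x)
      (fun m z => norm_epsTay_sub_fApprox_le R hr hK hK_one hδ_nonneg hδ m x z) y

theorem exists_crNorm_sub_fApprox_le (hr : 0 ≤ r) (hf : IsCrWith St r f D) {ε : ℝ} (hε : 0 < ε) :
    ∃ M : ℕ, ∀ h, M ≤ h →
      CrNorm St r (f - fApprox St R r D h) (D - fApproxDeriv R r D h) ≤ ε := by
  obtain ⟨K, hK_one, hK⟩ := exists_one_le_isCoeffBound St ⌊r⌋₊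
  have : 0 < K := one_pos.trans_le hK_one
  have hqr : 0 < St.q ^ r := Real.rpow_pos_of_pos St.q_pos r
  obtain ⟨M, hM⟩ := hf.exists_norm_epsTay_le (δ := ε / (K * St.q ^ r)) (by positivity)
  refine ⟨M, fun h hh => ?_⟩
  calc CrNorm St r (f - fApprox St R r D h) (D - fApproxDeriv R r D h)
      ≤ K * (ε / (K * St.q ^ r)) * St.q ^ r :=
        crNorm_sub_fApprox_le R hr hf hK hK_one (by positivity) fun m hm => hM m (hh.trans hm)
    _ = ε := by field_simp

end Convergence

theorem statement13_general (St : Setting S O E) (R : RepSystem St) (r : ℝ) (hr : 0 ≤ r)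
    (f : O → E) (D : (S → ℕ) → O → E) (hf : IsCrWith St r f D) :
    (∃ C : ℝ, 0 ≤ C ∧ ∃ n₀ : ℕ, ∀ h : ℕ, n₀ ≤ h →
      ∀ c : O → (S → ℕ) → E,
        (∀ a y : O,
          fApprox St R r D (h + 1) (a + St.ϖ ^ (h + 1) * y) -
              fApprox St R r D h (a + St.ϖ ^ (h + 1) * y) =
            ∑ i ∈ Idx S ⌊r⌋₊, c a i * mpow St (St.ϖ ^ (h + 1) * y) i) →
        ∀ a : O, ∀ i ∈ Idx S ⌊r⌋₊,
          ‖c a i‖ * St.q ^ (-(((h : ℝ) + 1) * (wt i : ℝ))) ≤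
            C * CfrSup St r f D h * St.q ^ (-(r * (h : ℝ)))) ∧
    (∀ ε : ℝ, 0 < ε → ∃ M : ℕ, ∀ h : ℕ, M ≤ h →
      ∃ D' : (S → ℕ) → O → E,
        IsCrWith St r (fun z => f z - fApprox St R r D h z) D' ∧
        CrNorm St r (fun z => f z - fApprox St R r D h z) D' ≤ ε) := by
  refine ⟨?_, fun ε hε => ?_⟩
  · obtain ⟨C, hC_nonneg, n₀, hC⟩ := exists_norm_coeff_fApprox_succ_sub_le R hf
    exact ⟨C, hC_nonneg, n₀, fun h hh c hc a => hC h hh a (c a) (hc a)⟩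
  · obtain ⟨M, hM⟩ := exists_crNorm_sub_fApprox_le R hr hf hε
    exact ⟨M, fun h hh =>
      ⟨D - fApproxDeriv R r D h, hf.sub (isCrWith_fApprox R hf.1 h), hM h hh⟩⟩

end WithoutCompleteness

/-- (i) there are `C ≥ 0` and `n₀` such that for `h ≥ n₀`, the coefficients `c`
of `f_{h+1} − f_h` on the cosets of `ϖ^{h+1} O` satisfy
`‖f_{h+1}−f_h‖_{𝓕_{h+1}} ≤ C · C_{f,r}(h) · q^{−rh}`; (ii) `f_h → f` in `C^r(O,E)`. -/
theorem statement13 (St : Setting S O E) (R : RepSystem St) (r : ℝ) (hr : 0 ≤ r)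
    (f : O → E) (D : (S → ℕ) → O → E) (hf : IsCrWith St r f D) :
    (∃ C : ℝ, 0 ≤ C ∧ ∃ n₀ : ℕ, ∀ h : ℕ, n₀ ≤ h →
      ∀ c : O → (S → ℕ) → E,
        (∀ a y : O,
          fApprox St R r D (h + 1) (a + St.ϖ ^ (h + 1) * y) -
              fApprox St R r D h (a + St.ϖ ^ (h + 1) * y) =
            ∑ i ∈ Idx S ⌊r⌋₊, c a i * mpow St (St.ϖ ^ (h + 1) * y) i) →
        ∀ a : O, ∀ i ∈ Idx S ⌊r⌋₊,
          ‖c a i‖ * St.q ^ (-(((h : ℝ) + 1) * (wt i : ℝ))) ≤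
            C * CfrSup St r f D h * St.q ^ (-(r * (h : ℝ)))) ∧
    (∀ ε : ℝ, 0 < ε → ∃ M : ℕ, ∀ h : ℕ, M ≤ h →
      ∃ D' : (S → ℕ) → O → E,
        IsCrWith St r (fun z => f z - fApprox St R r D h z) D' ∧
        CrNorm St r (fun z => f z - fApprox St R r D h z) D' ≤ ε) :=
  statement13_general St R r hr f D hf

end CrPaper
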